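/- For every subset S of SU(2), the centralizer Z = {g ∈ SU(2) : g·s = s·g for all s ∈ S} has at most 2 connected components (in the subspace topology of SU(2)). -/

import Mathlib

open Matrix

/-!
Among the `2 × 2` matrices, those with `gᴴ = adjugate g` form a real subspace, the quaternions, on
which `gᴴ * g = det g • 1` and hence `‖g‖² = 2 det g` for the Frobenius norm. Thus `SU(2)` is a
sphere in that subspace, and a centralizer in `SU(2)` is a sphere in a smaller real subspace.
Such a sphere is connected if the subspace has dimension at least two, and consists of at most
two points otherwise.
-/

/-- The set `s` has at most two connected components, expressed as being the union of two
preconnected sets; these may overlap or be empty. -/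
def HasAtMostTwoComponents {X : Type*} [TopologicalSpace X] (s : Set X) : Prop :=
  ∃ A B : Set X, IsPreconnected A ∧ IsPreconnected B ∧ s = A ∪ B

theorem HasAtMostTwoComponents.image {X Y : Type*} [TopologicalSpace X] [TopologicalSpace Y]
    {s : Set X} (hs : HasAtMostTwoComponents s) {f : X → Y} (hf : ContinuousOn f s) :
    HasAtMostTwoComponents (f '' s) := by
  obtain ⟨A, B, hA, hB, rfl⟩ := hs
  exact ⟨f '' A, f '' B, hA.image f (hf.mono Set.subset_union_left),
    hB.image f (hf.mono Set.subset_union_right), Set.image_union f A B⟩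

section Sphere

variable {E : Type*} [NormedAddCommGroup E] [NormedSpace ℝ E]

theorem eq_or_eq_neg_of_norm_eq_of_rank_le_one (hE : Module.rank ℝ E ≤ 1) {x y : E}
    (hxy : ‖x‖ = ‖y‖) : x = y ∨ x = -y := by
  obtain ⟨v, hv⟩ := rank_le_one_iff.1 hE
  obtain ⟨a, rfl⟩ := hv x
  obtain ⟨b, rfl⟩ := hv y
  rcases eq_or_ne v 0 with rfl | hv_ne
  · simp
  · have hab : |a| = |b| := by simpa [norm_smul, hv_ne] using hxy
    rcases abs_eq_abs.1 hab with rfl | rfl <;> simp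

theorem hasAtMostTwoComponents_sphere_zero (r : ℝ) :
    HasAtMostTwoComponents (Metric.sphere (0 : E) r) := by
  rcases lt_or_ge 1 (Module.rank ℝ E) with hE | hE
  · exact ⟨_, ∅, isPreconnected_sphere hE 0 r, isPreconnected_empty, (Set.union_empty _).symm⟩
  rcases (Metric.sphere (0 : E) r).eq_empty_or_nonempty with h_empty | ⟨x, hx⟩
  · exact ⟨∅, ∅, isPreconnected_empty, isPreconnected_empty, by simp [h_empty]⟩
  refine ⟨{x}, {-x}, isPreconnected_singleton, isPreconnected_singleton, ?_⟩
  rw [mem_sphere_zero_iff_norm] at hx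
  ext y
  simp only [mem_sphere_zero_iff_norm, Set.mem_union, Set.mem_singleton_iff]
  constructor
  · exact fun hy ↦ eq_or_eq_neg_of_norm_eq_of_rank_le_one hE (hy.trans hx.symm)
  · rintro (rfl | rfl) <;> simp [hx]

theorem hasAtMostTwoComponents_sphere_inter_submodule (V : Submodule ℝ E) (r : ℝ) :
    HasAtMostTwoComponents (Metric.sphere 0 r ∩ (V : Set E)) := by
  have h_image : Metric.sphere 0 r ∩ (V : Set E) = (↑) '' Metric.sphere (0 : V) r := by
    ext x
    simp [and_comm]
  rw [h_image]
  exact (hasAtMostTwoComponents_sphere_zero r).image continuous_subtype_val.continuousOn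

end Sphere

section SpecialUnitary

theorem mem_specialUnitaryGroup_iff_conjTranspose_eq_adjugate {n R : Type*} [Fintype n]
    [DecidableEq n] [CommRing R] [StarRing R] {g : Matrix n n R} :
    g ∈ specialUnitaryGroup n R ↔ gᴴ = adjugate g ∧ g.det = 1 := by
  rw [mem_specialUnitaryGroup_iff, mem_unitaryGroup_iff', star_eq_conjTranspose]
  refine and_congr_left fun h_det ↦ ⟨fun h_unitary ↦ ?_, fun h_adj ↦ ?_⟩
  · calc gᴴ = gᴴ * (g * adjugate g) := by rw [mul_adjugate, h_det, one_smul, mul_one]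
      _ = adjugate g := by rw [← mul_assoc, h_unitary, one_mul]
  · rw [h_adj, adjugate_mul, h_det, one_smul]

variable (𝕜 : Type*) [RCLike 𝕜]

/-- The quaternions as a real space of `2 × 2` matrices: for `𝕜 = ℂ` these are the matrices
`!![a, b; -star b, star a]`. The condition is real-linear since the adjugate is linear in
size two. -/
def quaternionMatrices : Submodule ℝ (Matrix (Fin 2) (Fin 2) 𝕜) where
  carrier := {g | gᴴ = adjugate g}
  zero_mem' := by simp
  add_mem' {g h} hg hh := by
    rw [Set.mem_ofPred_eq] at hg hh ⊢
    rw [conjTranspose_add, hg, hh]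
    simp [adjugate_fin_two, add_comm]
  smul_mem' r g hg := by
    rw [Set.mem_ofPred_eq] at hg ⊢
    rw [conjTranspose_smul, hg]
    simp [adjugate_fin_two]

variable {𝕜}

theorem mem_quaternionMatrices {g : Matrix (Fin 2) (Fin 2) 𝕜} :
    g ∈ quaternionMatrices 𝕜 ↔ gᴴ = adjugate g :=
  Iff.rfl

section Frobenius

open scoped Matrix.Norms.Frobenius

theorem trace_conjTranspose_mul_self_eq_frobenius_norm_sq {m n : Type*} [Fintype m] [Fintype n]
    (A : Matrix m n 𝕜) : (Aᴴ * A).trace = (‖A‖ : 𝕜) ^ 2 := by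
  have h_norm : ‖A‖ ^ 2 = ∑ i, ∑ j, ‖A i j‖ ^ 2 := by
    rw [frobenius_norm_def, ← Real.sqrt_eq_rpow, Real.sq_sqrt (by positivity)]
    simp
  rw [← RCLike.ofReal_pow, h_norm, Finset.sum_comm]
  simp [trace, mul_apply, RCLike.conj_mul]

theorem frobenius_norm_sq_eq_two_mul_det {g : Matrix (Fin 2) (Fin 2) 𝕜}
    (hg : g ∈ quaternionMatrices 𝕜) : (‖g‖ : 𝕜) ^ 2 = 2 * g.det := by
  rw [← trace_conjTranspose_mul_self_eq_frobenius_norm_sq, mem_quaternionMatrices.1 hg,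
    adjugate_mul, trace_smul, trace_one]
  simp [mul_comm]

theorem specialUnitaryGroup_fin_two_eq_sphere_inter_quaternionMatrices :
    (specialUnitaryGroup (Fin 2) 𝕜 : Set (Matrix (Fin 2) (Fin 2) 𝕜)) =
      Metric.sphere 0 √2 ∩ quaternionMatrices 𝕜 := by
  ext g
  rw [SetLike.mem_coe, mem_specialUnitaryGroup_iff_conjTranspose_eq_adjugate, Set.inter_comm]
  refine and_congr_right fun hg ↦ ?_
  have h_norm := frobenius_norm_sq_eq_two_mul_det hg
  calc g.det = 1 ↔ (‖g‖ : 𝕜) ^ 2 = 2 := by simp [h_norm]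
    _ ↔ ‖g‖ ^ 2 = 2 := by norm_cast
    _ ↔ ‖g‖ = √2 := by
      rw [eq_comm (b := √2), Real.sqrt_eq_iff_eq_sq zero_le_two (norm_nonneg g), eq_comm]
    _ ↔ g ∈ Metric.sphere 0 √2 := mem_sphere_zero_iff_norm.symm

end Frobenius

theorem hasAtMostTwoComponents_specialUnitaryGroup_inter_submodule
    (V : Submodule ℝ (Matrix (Fin 2) (Fin 2) 𝕜)) :
    HasAtMostTwoComponents
      ((specialUnitaryGroup (Fin 2) 𝕜 : Set (Matrix (Fin 2) (Fin 2) 𝕜)) ∩ V) := by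
  rw [specialUnitaryGroup_fin_two_eq_sphere_inter_quaternionMatrices, Set.inter_assoc,
    ← Submodule.coe_inf]
  open scoped Matrix.Norms.Frobenius in
  exact hasAtMostTwoComponents_sphere_inter_submodule _ _

end SpecialUnitary

theorem su2_centralizer_at_most_two_components_general {𝕜 : Type*} [RCLike 𝕜]
    (S : Set (Matrix (Fin 2) (Fin 2) 𝕜)) :
    ∃ A B : Set (Matrix (Fin 2) (Fin 2) 𝕜), IsPreconnected A ∧ IsPreconnected B ∧
      {g : Matrix (Fin 2) (Fin 2) 𝕜 |
        (gᴴ * g = 1 ∧ g.det = 1) ∧ ∀ s ∈ S, g * s = s * g} = A ∪ B := by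
  have h_eq : {g : Matrix (Fin 2) (Fin 2) 𝕜 |
      (gᴴ * g = 1 ∧ g.det = 1) ∧ ∀ s ∈ S, g * s = s * g} =
      (specialUnitaryGroup (Fin 2) 𝕜 : Set (Matrix (Fin 2) (Fin 2) 𝕜)) ∩
        (Subalgebra.centralizer ℝ S).toSubmodule := by
    ext g
    simp [mem_specialUnitaryGroup_iff, mem_unitaryGroup_iff', star_eq_conjTranspose,
      Set.mem_centralizer_iff, eq_comm]
  rw [h_eq]
  exact hasAtMostTwoComponents_specialUnitaryGroup_inter_submodule _

/-- The centralizer of any subset of `SU(2)` has at most 2 connected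
components: it is the union of two preconnected sets. -/
theorem su2_centralizer_at_most_two_components
    (S : Set (Matrix (Fin 2) (Fin 2) ℂ))
    (hS : ∀ s ∈ S, sᴴ * s = 1 ∧ s.det = 1) :
    ∃ A B : Set (Matrix (Fin 2) (Fin 2) ℂ), IsPreconnected A ∧ IsPreconnected B ∧
      {g : Matrix (Fin 2) (Fin 2) ℂ |
        (gᴴ * g = 1 ∧ g.det = 1) ∧ ∀ s ∈ S, g * s = s * g} = A ∪ B :=
  su2_centralizer_at_most_two_components_general S
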